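/- arXiv:2012.13943 — 2 statements merged into one kernel-verified Lean document; each statement's English description precedes it below -/
import Mathlib

section
/- Let n ∈ ℕ and let D be a symmetric n×n real matrix. Let τ ∈ ℝ, P⁺, P, Q⁺, Q, h ∈ ℝⁿ and r⁺, r ∈ ℝ. Define G₁ ∈ ℝⁿ by (G₁)ⱼ = hⱼ·((Q⁺+Q)/2)ⱼ and G₂ ∈ ℝⁿ by (G₂)ⱼ = hⱼ·((P⁺+P)/2)ⱼ for each j. If P⁺ − P = τ·(−D·((Q⁺+Q)/2) + ((r⁺+r)/2)·G₁) and Q⁺ − Q = τ·(D·((P⁺+P)/2) − ((r⁺+r)/2)·G₂), then ‖P⁺‖² + ‖Q⁺‖² = ‖P‖² + ‖Q‖², where ‖·‖ is the Euclidean norm. -/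
/-!
Both components are advanced by one symmetric operator `K`: the increment of `P` is `-K` applied to
`Q⁺ + Q` and that of `Q` is `K` applied to `P⁺ + P`. Since `‖x‖² - ‖y‖² = Re ⟪x + y, x - y⟫`, the
changes of `‖P‖²` and `‖Q‖²` are opposite values of the symmetric form `Re ⟪·, K ·⟫`.
-/

open RCLike
open scoped InnerProductSpace ComplexConjugate

section InnerProductSpace

variable {𝕜 E : Type*} [RCLike 𝕜] [NormedAddCommGroup E] [InnerProductSpace 𝕜 E]

variable (𝕜) in
theorem norm_sq_sub_norm_sq_eq_re_inner_add_sub (x y : E) :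
    ‖x‖ ^ 2 - ‖y‖ ^ 2 = re ⟪x + y, x - y⟫_𝕜 := by
  simp only [inner_add_left, inner_sub_right, map_add, map_sub, inner_self_eq_norm_sq]
  linarith [inner_re_symm (𝕜 := 𝕜) x y]

theorem norm_sq_add_norm_sq_eq_of_sub_eq_map_add {K : E →ₗ[𝕜] E} (hK : K.IsSymmetric)
    {p' p q' q : E} (hp : p' - p = -K (q' + q)) (hq : q' - q = K (p' + p)) :
    ‖p'‖ ^ 2 + ‖q'‖ ^ 2 = ‖p‖ ^ 2 + ‖q‖ ^ 2 := by
  have hsymm : re ⟪p' + p, K (q' + q)⟫_𝕜 = re ⟪q' + q, K (p' + p)⟫_𝕜 := by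
    rw [← hK, inner_re_symm]
  have hchange : (‖p'‖ ^ 2 - ‖p‖ ^ 2) + (‖q'‖ ^ 2 - ‖q‖ ^ 2) = 0 := by
    rw [norm_sq_sub_norm_sq_eq_re_inner_add_sub 𝕜 p',
      norm_sq_sub_norm_sq_eq_re_inner_add_sub 𝕜 q', hp, hq, inner_neg_right, map_neg,
      hsymm, neg_add_cancel]
  linarith

theorem sav_mass_conservation_pointwise_multiplier_general {T M : E →ₗ[𝕜] E}
    (hT : T.IsSymmetric) (hM : M.IsSymmetric) {τ s : 𝕜} (hτ : conj τ = τ) (hs : conj s = s)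
    {p' p q' q g₁ g₂ : E}
    (hg₁ : g₁ = M ((2 : 𝕜)⁻¹ • (q' + q))) (hg₂ : g₂ = M ((2 : 𝕜)⁻¹ • (p' + p)))
    (hp : p' - p = τ • (-T ((2 : 𝕜)⁻¹ • (q' + q)) + s • g₁))
    (hq : q' - q = τ • (T ((2 : 𝕜)⁻¹ • (p' + p)) - s • g₂)) :
    ‖p'‖ ^ 2 + ‖q'‖ ^ 2 = ‖p‖ ^ 2 + ‖q‖ ^ 2 := by
  let K : E →ₗ[𝕜] E := τ • (2 : 𝕜)⁻¹ • (T - s • M)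
  have conj_half : conj (2 : 𝕜)⁻¹ = 2⁻¹ := by rw [map_inv₀, map_ofNat]
  have hK : K.IsSymmetric := ((hT.sub (hM.smul hs)).smul conj_half).smul hτ
  have hp' : p' - p = -K (q' + q) := by
    rw [hp, hg₁]
    simp only [K, map_smul, LinearMap.smul_apply, LinearMap.sub_apply]
    module
  have hq' : q' - q = K (p' + p) := by
    rw [hq, hg₂]
    simp only [K, map_smul, LinearMap.smul_apply, LinearMap.sub_apply]
    module
  exact norm_sq_add_norm_sq_eq_of_sub_eq_map_add hK hp' hq'

end InnerProductSpace

theorem toEuclideanLin_diagonal_apply {𝕜 ι : Type*} [RCLike 𝕜] [Fintype ι] [DecidableEq ι]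
    (d : ι → 𝕜) (x : EuclideanSpace 𝕜 ι) (i : ι) :
    Matrix.toEuclideanLin (Matrix.diagonal d) x i = d i * x i :=
  Matrix.mulVec_diagonal d x.ofLp i

/-- Conservation of the discrete L² norm (mass) by the CN-SAV scheme when the
nonlinear terms have the pointwise multiplier form of the Gross–Pitaevskii
nonlinearity. -/
theorem sav_mass_conservation_pointwise_multiplier
    (n : ℕ) (D : Matrix (Fin n) (Fin n) ℝ) (hD : D.IsSymm)
    (τ : ℝ) (Pp P Qp Q h G₁ G₂ : EuclideanSpace ℝ (Fin n)) (rp r : ℝ)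
    (hG₁ : ∀ j : Fin n, G₁ j = h j * (((2:ℝ)⁻¹ • (Qp + Q)) j))
    (hG₂ : ∀ j : Fin n, G₂ j = h j * (((2:ℝ)⁻¹ • (Pp + P)) j))
    (hP : Pp - P =
      τ • (-(Matrix.toEuclideanLin D ((2:ℝ)⁻¹ • (Qp + Q))) + ((rp + r)/2) • G₁))
    (hQ : Qp - Q =
      τ • (Matrix.toEuclideanLin D ((2:ℝ)⁻¹ • (Pp + P)) - ((rp + r)/2) • G₂)) :
    ‖Pp‖^2 + ‖Qp‖^2 = ‖P‖^2 + ‖Q‖^2 := by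
  have eq_diagonal {g x : EuclideanSpace ℝ (Fin n)} (hg : ∀ j, g j = h j * x j) :
      g = Matrix.toEuclideanLin (Matrix.diagonal h.ofLp) x :=
    PiLp.ext fun j => (hg j).trans (toEuclideanLin_diagonal_apply h.ofLp x j).symm
  exact sav_mass_conservation_pointwise_multiplier_general
    (Matrix.isSymmetric_toEuclideanLin_iff.mpr (Matrix.isHermitian_iff_isSymm.mpr hD))
    (Matrix.isSymmetric_toEuclideanLin_iff.mpr (Matrix.isHermitian_diagonal h.ofLp))
    (conj_trivial τ) (conj_trivial _) (eq_diagonal hG₁) (eq_diagonal hG₂) hP hQ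
end

section
/- Let E be a real inner product space, J : E → E a linear map, τ ≠ 0, Zᵏ, B, G ∈ E and rᵏ ∈ ℝ. Suppose Z₁, Z₂ ∈ E satisfy (2/τ)·Z₁ + J(Z₁) = (2/τ)·Zᵏ and (2/τ)·Z₂ + J(Z₂) = −B, and that 2 − ⟨G, Z₂⟩ ≠ 0. Define r^{1/2} := (2·rᵏ + ⟨G, Z₁ − Zᵏ⟩)/(2 − ⟨G, Z₂⟩), Z^{1/2} := Z₁ + r^{1/2}·Z₂, Z^{k+1} := 2·Z^{1/2} − Zᵏ, and r^{k+1} := 2·r^{1/2} − rᵏ. Then (Z^{k+1} − Zᵏ)/τ = −J(Z^{1/2}) − r^{1/2}·B and r^{k+1} − rᵏ = ½·⟨G, Z^{k+1} − Zᵏ⟩. -/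
open scoped RealInnerProductSpace

/-!
The midpoint equation is linear in the pair `(Z, r)`, so the solution `Z₁` driven by `Zᵏ` and the
response `Z₂` to `-B` superpose to a solution `Z₁ + r Z₂` for every `r`. Inserting this into the
scalar equation `2 (r - rᵏ) = ⟪G, Z₁ + r Z₂ - Zᵏ⟫` leaves one affine equation in `r`, whose leading
coefficient is `2 - ⟪G, Z₂⟫`. Extrapolating from the midpoint, `x ↦ 2 x - xᵏ`, turns both midpoint
equations into the equations of the scheme.
-/

section Superposition

variable {R E : Type*} [CommRing R] [AddCommGroup E] [Module R E]

lemma smul_add_map_add_smul_eq_sub {J : E →ₗ[R] E} {a : R} {f b z₁ z₂ : E}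
    (h₁ : a • z₁ + J z₁ = f) (h₂ : a • z₂ + J z₂ = -b) (r : R) :
    a • (z₁ + r • z₂) + J (z₁ + r • z₂) = f - r • b :=
  calc
    a • (z₁ + r • z₂) + J (z₁ + r • z₂) = (a • z₁ + J z₁) + r • (a • z₂ + J z₂) := by
      rw [map_add, map_smul]
      module
    _ = f - r • b := by rw [h₁, h₂, smul_neg, sub_eq_add_neg]

lemma two_mul_sub_eq_map_add_smul_sub_iff (ℓ : E →ₗ[R] R) (z z₁ z₂ : E) (r s : R) :
    2 * (r - s) = ℓ (z₁ + r • z₂ - z) ↔ r * (2 - ℓ z₂) = 2 * s + ℓ (z₁ - z) := by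
  simp only [map_add, map_sub, map_smul, smul_eq_mul]
  constructor <;> intro h <;> linear_combination h

end Superposition

section Extrapolation

variable {K E : Type*} [Field K] [AddCommGroup E] [Module K E]

lemma inv_smul_extrapolation_sub_eq {τ : K} {z w v c : E}
    (h : (2 / τ) • w + v = (2 / τ) • z - c) :
    τ⁻¹ • ((2 : K) • w - z - z) = -v - c :=
  calc
    τ⁻¹ • ((2 : K) • w - z - z) = (2 / τ) • w - (2 / τ) • z := by module
    _ = -v - c := by rw [eq_sub_of_add_eq h]; abel

lemma half_mul_map_extrapolation_sub [NeZero (2 : K)] (ℓ : E →ₗ[K] K) (z w : E) :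
    (1 / 2) * ℓ ((2 : K) • w - z - z) = ℓ (w - z) := by
  have increment : (2 : K) • w - z - z = (2 : K) • (w - z) := by module
  rw [increment, map_smul, smul_eq_mul, one_div, inv_mul_cancel_left₀ two_ne_zero]

theorem sav_algorithm_two_correct_general [NeZero (2 : K)]
    (J : E →ₗ[K] E) (ℓ : E →ₗ[K] K) (τ : K) (_hτ : τ ≠ 0) (Zk B : E) (rk : K) (Z₁ Z₂ : E)
    (h1 : (2 / τ) • Z₁ + J Z₁ = (2 / τ) • Zk)
    (h2 : (2 / τ) • Z₂ + J Z₂ = -B)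
    (hden : 2 - ℓ Z₂ ≠ 0) :
    let rhalf : K := (2 * rk + ℓ (Z₁ - Zk)) / (2 - ℓ Z₂)
    let Zhalf : E := Z₁ + rhalf • Z₂
    let Zk1 : E := (2 : K) • Zhalf - Zk
    let rk1 : K := 2 * rhalf - rk
    τ⁻¹ • (Zk1 - Zk) = -(J Zhalf) - rhalf • B ∧
      rk1 - rk = (1 / 2) * ℓ (Zk1 - Zk) := by
  intro rhalf Zhalf Zk1 rk1
  have scalar_midpoint : 2 * (rhalf - rk) = ℓ (Zhalf - Zk) :=
    (two_mul_sub_eq_map_add_smul_sub_iff ℓ Zk Z₁ Z₂ rhalf rk).2 (div_mul_cancel₀ _ hden)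
  refine ⟨inv_smul_extrapolation_sub_eq (smul_add_map_add_smul_eq_sub h1 h2 rhalf), ?_⟩
  calc
    rk1 - rk = 2 * (rhalf - rk) := by ring
    _ = ℓ (Zhalf - Zk) := scalar_midpoint
    _ = (1 / 2) * ℓ (Zk1 - Zk) := (half_mul_map_extrapolation_sub ℓ Zk Zhalf).symm

end Extrapolation

/-- Correctness of Algorithm 2 for solving the fully discrete CN-SAV system. -/
theorem sav_algorithm_two_correct
    {E : Type*} [NormedAddCommGroup E] [InnerProductSpace ℝ E]
    (J : E →ₗ[ℝ] E) (τ : ℝ) (hτ : τ ≠ 0) (Zk B G : E) (rk : ℝ)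
    (Z₁ Z₂ : E)
    (h1 : (2/τ) • Z₁ + J Z₁ = (2/τ) • Zk)
    (h2 : (2/τ) • Z₂ + J Z₂ = -B)
    (hden : 2 - ⟪G, Z₂⟫ ≠ 0) :
    let rhalf : ℝ := (2 * rk + ⟪G, Z₁ - Zk⟫) / (2 - ⟪G, Z₂⟫)
    let Zhalf : E := Z₁ + rhalf • Z₂
    let Zk1 : E := (2:ℝ) • Zhalf - Zk
    let rk1 : ℝ := 2 * rhalf - rk
    τ⁻¹ • (Zk1 - Zk) = -(J Zhalf) - rhalf • B ∧
      rk1 - rk = (1/2) * ⟪G, Zk1 - Zk⟫ :=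
  sav_algorithm_two_correct_general J (innerₗ E G) τ hτ Zk B rk Z₁ Z₂ h1 h2 hden
end
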